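/- Lipschitz-type bound for the G-MFCQ function: for all x, y ∈ ℝⁿ, s(x) − s(y) ≤ 2‖p‖₂ ‖x − y‖₂. -/

import Mathlib

open Matrix

noncomputable section

/-- Euclidean (ℓ₂) norm of a finite real vector. -/
def vecNorm {k : ℕ} (u : Fin k → ℝ) : ℝ := Real.sqrt (∑ i, u i ^ 2)

/-- The matrix pencil `p(x, X) = F₀ + ∑ₖ xₖ Kₖ + ∑ᵢ ∑ⱼ Xᵢⱼ Lᵢⱼ`. -/
def pencil {n m : ℕ} (F0 : Matrix (Fin m) (Fin m) ℝ)
    (K : Fin n → Matrix (Fin m) (Fin m) ℝ)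
    (L : Fin n → Fin n → Matrix (Fin m) (Fin m) ℝ)
    (x : Fin n → ℝ) (X : Matrix (Fin n) (Fin n) ℝ) : Matrix (Fin m) (Fin m) ℝ :=
  F0 + ∑ k, x k • K k + ∑ i, ∑ j, X i j • L i j

/-- Negative semidefinite real matrix. -/
def NegSemidef' {k : ℕ} (A : Matrix (Fin k) (Fin k) ℝ) : Prop := (-A).PosSemidef

/-- Negative definite real matrix. -/
def NegDef' {k : ℕ} (A : Matrix (Fin k) (Fin k) ℝ) : Prop := (-A).PosDef

/-- The BMI feasible set `F = {x : p(x, xxᵀ) ⪯ 0}`. -/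
def feasSet {n m : ℕ} (F0 : Matrix (Fin m) (Fin m) ℝ)
    (K : Fin n → Matrix (Fin m) (Fin m) ℝ)
    (L : Fin n → Fin n → Matrix (Fin m) (Fin m) ℝ) : Set (Fin n → ℝ) :=
  {x | NegSemidef' (pencil F0 K L x (vecMulVec x x))}

/-- Feasibility distance `d_F(x) = inf {‖x − a‖₂ : a ∈ F}`. -/
def distF {n m : ℕ} (F0 : Matrix (Fin m) (Fin m) ℝ)
    (K : Fin n → Matrix (Fin m) (Fin m) ℝ)
    (L : Fin n → Fin n → Matrix (Fin m) (Fin m) ℝ) (x : Fin n → ℝ) : ℝ :=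
  sInf {r | ∃ a ∈ feasSet F0 K L, r = vecNorm (x - a)}

/-- `δₖ(x) = 2 ∑ᵢ xᵢ L_{k i}`. -/
def deltaMat {n m : ℕ} (L : Fin n → Fin n → Matrix (Fin m) (Fin m) ℝ)
    (k : Fin n) (x : Fin n → ℝ) : Matrix (Fin m) (Fin m) ℝ :=
  (2 : ℝ) • ∑ i, x i • L k i

/-- The MFCQ condition at a point `x`. -/
def MFCQ {n m : ℕ} (F0 : Matrix (Fin m) (Fin m) ℝ)
    (K : Fin n → Matrix (Fin m) (Fin m) ℝ)
    (L : Fin n → Fin n → Matrix (Fin m) (Fin m) ℝ) (x : Fin n → ℝ) : Prop :=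
  ∃ b : Fin n → ℝ,
    NegDef' (pencil F0 K L x (vecMulVec x x) + ∑ k, b k • (K k + deltaMat L k x))

/-- Smallest eigenvalue of a symmetric real matrix, via the Rayleigh quotient. -/
def lambdaMin {k : ℕ} (A : Matrix (Fin k) (Fin k) ℝ) : ℝ :=
  sInf {r | ∃ u : Fin k → ℝ, vecNorm u = 1 ∧ r = u ⬝ᵥ (A *ᵥ u)}

/-- The G-MFCQ function `s(x)`. -/
def sFun {n m : ℕ} (K : Fin n → Matrix (Fin m) (Fin m) ℝ)
    (L : Fin n → Fin n → Matrix (Fin m) (Fin m) ℝ) (x : Fin n → ℝ) : ℝ :=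
  sSup {r | ∃ b : Fin n → ℝ, vecNorm b = 1 ∧
    r = lambdaMin (-(∑ k, b k • (K k + deltaMat L k x)))}

/-- Spectral norm of a real matrix. -/
def specNorm {k : ℕ} (A : Matrix (Fin k) (Fin k) ℝ) : ℝ :=
  sSup {r | ∃ v : Fin k → ℝ, vecNorm v = 1 ∧ r = vecNorm (A *ᵥ v)}

/-- Pencil norm `‖p‖₂`. -/
def pencilNorm {n m : ℕ} (L : Fin n → Fin n → Matrix (Fin m) (Fin m) ℝ) : ℝ :=
  sSup {r | ∃ u : Fin m → ℝ, vecNorm u = 1 ∧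
    r = specNorm (Matrix.of fun i j => u ⬝ᵥ (L i j *ᵥ u))}

/-- Cone `C₁`: positive semidefinite matrices. -/
def coneC1 (n : ℕ) : Set (Matrix (Fin n) (Fin n) ℝ) := {H | H.PosSemidef}

/-- Cone `C₂`: symmetric matrices with `Hᵢᵢ ≥ 0` and `Hᵢᵢ Hⱼⱼ ≥ Hᵢⱼ²`. -/
def coneC2 (n : ℕ) : Set (Matrix (Fin n) (Fin n) ℝ) :=
  {H | H.IsSymm ∧ ∀ i j, 0 ≤ H i i ∧ H i j ^ 2 ≤ H i i * H j j}

/-- Cone `C₃`: symmetric matrices with `Hᵢᵢ ≥ 0` and `Hᵢᵢ + Hⱼⱼ ≥ 2|Hᵢⱼ|`. -/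
def coneC3 (n : ℕ) : Set (Matrix (Fin n) (Fin n) ℝ) :=
  {H | H.IsSymm ∧ ∀ i j, 0 ≤ H i i ∧ 2 * |H i j| ≤ H i i + H j j}

/-- Dual cone with respect to the trace inner product. -/
def dualCone {n : ℕ} (C : Set (Matrix (Fin n) (Fin n) ℝ)) :
    Set (Matrix (Fin n) (Fin n) ℝ) :=
  {Y | Y.IsSymm ∧ ∀ H ∈ C, 0 ≤ (Y * H).trace}

/-- `α(Λ)` : the n×n matrix with entries `⟨Lᵢⱼ, Λ⟩ = tr(Lᵢⱼ Λ)`. -/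
def alphaMat {n m : ℕ} (L : Fin n → Fin n → Matrix (Fin m) (Fin m) ℝ)
    (Λ : Matrix (Fin m) (Fin m) ℝ) : Matrix (Fin n) (Fin n) ℝ :=
  Matrix.of fun i j => (L i j * Λ).trace

/-- Objective of the penalized problem `(P_η)`. -/
def penObj {n : ℕ} (c xc : Fin n → ℝ) (η : ℝ) (x : Fin n → ℝ) : ℝ :=
  c ⬝ᵥ x + η * vecNorm (x - xc) ^ 2

/-- `x` is an optimal solution of the penalized problem `(P_η)`. -/
def IsOptPen {n m : ℕ} (F0 : Matrix (Fin m) (Fin m) ℝ)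
    (K : Fin n → Matrix (Fin m) (Fin m) ℝ)
    (L : Fin n → Fin n → Matrix (Fin m) (Fin m) ℝ)
    (c xc : Fin n → ℝ) (η : ℝ) (x : Fin n → ℝ) : Prop :=
  x ∈ feasSet F0 K L ∧ ∀ y ∈ feasSet F0 K L, penObj c xc η x ≤ penObj c xc η y

/-- Objective of the penalized convex relaxation `(R_{η,C})`. -/
def relObj {n : ℕ} (c xc : Fin n → ℝ) (η : ℝ) (x : Fin n → ℝ)
    (X : Matrix (Fin n) (Fin n) ℝ) : ℝ :=
  c ⬝ᵥ x + η * (X.trace - 2 * (xc ⬝ᵥ x) + xc ⬝ᵥ xc)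

/-- Feasibility for the relaxation with cone `C`. -/
def RelFeasible {n m : ℕ} (F0 : Matrix (Fin m) (Fin m) ℝ)
    (K : Fin n → Matrix (Fin m) (Fin m) ℝ)
    (L : Fin n → Fin n → Matrix (Fin m) (Fin m) ℝ)
    (C : Set (Matrix (Fin n) (Fin n) ℝ))
    (x : Fin n → ℝ) (X : Matrix (Fin n) (Fin n) ℝ) : Prop :=
  X.IsSymm ∧ NegSemidef' (pencil F0 K L x X) ∧ X - vecMulVec x x ∈ C

/-- `(x, X)` is an optimal solution of the penalized convex relaxation `(R_{η,C})`. -/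
def IsOptRel {n m : ℕ} (F0 : Matrix (Fin m) (Fin m) ℝ)
    (K : Fin n → Matrix (Fin m) (Fin m) ℝ)
    (L : Fin n → Fin n → Matrix (Fin m) (Fin m) ℝ)
    (c xc : Fin n → ℝ) (η : ℝ) (C : Set (Matrix (Fin n) (Fin n) ℝ))
    (x : Fin n → ℝ) (X : Matrix (Fin n) (Fin n) ℝ) : Prop :=
  RelFeasible F0 K L C x X ∧
    ∀ y Y, RelFeasible F0 K L C y Y → relObj c xc η x X ≤ relObj c xc η y Y

/-- The KKT conditions for `(P_η)` at `(x, Λ)`. -/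
def KKT {n m : ℕ} (F0 : Matrix (Fin m) (Fin m) ℝ)
    (K : Fin n → Matrix (Fin m) (Fin m) ℝ)
    (L : Fin n → Fin n → Matrix (Fin m) (Fin m) ℝ)
    (c xc : Fin n → ℝ) (η : ℝ)
    (x : Fin n → ℝ) (Λ : Matrix (Fin m) (Fin m) ℝ) : Prop :=
  Λ.IsSymm ∧ Λ.PosSemidef ∧
  c + (2 * η) • (x - xc) + (∑ k, ((K k * Λ).trace) • (Pi.single k 1 : Fin n → ℝ))
      + (2 : ℝ) • (alphaMat L Λ *ᵥ x) = 0 ∧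
  Λ * pencil F0 K L x (vecMulVec x x) = 0

/-!
Write `A_x(b) = -∑ₖ bₖ (Kₖ + δₖ(x))`, so that `s(x)` is the maximum over unit vectors `b` of the
minimum over unit vectors `u` of `uᵀ A_x(b) u`. Since `δₖ` is linear in `x`,
`uᵀ A_x(b) u = uᵀ A_y(b) u - 2 bᵀ M(u) (x - y)` with `M(u)ᵢⱼ = uᵀ Lᵢⱼ u`, and by Cauchy–Schwarz the
last term is at most `2 ‖M(u)‖ ‖x - y‖₂ ≤ 2 ‖p‖₂ ‖x - y‖₂`. A uniform bound on the change of the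
quadratic form is also a bound on the change of its max-min value.
-/

open Metric Set WithLp
open scoped Matrix.Norms.L2Operator

lemma ciSup_ciInf_le_ciSup_ciInf_add {α ι κ : Type*} [ConditionallyCompleteLattice α]
    [AddCommGroup α] [AddLeftMono α] [Nonempty ι] [Nonempty κ] {f g : ι → κ → α} {c : α}
    (hf : ∀ i, BddBelow (range (f i))) (hg : BddAbove (range fun i ↦ ⨅ k, g i k))
    (h : ∀ i k, f i k ≤ g i k + c) :
    ⨆ i, ⨅ k, f i k ≤ (⨆ i, ⨅ k, g i k) + c := by
  refine ciSup_le fun i ↦ ?_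
  calc ⨅ k, f i k ≤ (⨅ k, g i k) + c :=
        sub_le_iff_le_add.mp <| le_ciInf fun k ↦
          sub_le_iff_le_add.mpr <| (ciInf_le (hf i) k).trans (h i k)
    _ ≤ (⨆ i, ⨅ k, g i k) + c := by gcongr; exact le_ciSup hg i

lemma abs_dotProduct_mulVec_le {ι κ : Type*} [Fintype ι] [Fintype κ] [DecidableEq κ]
    (A : Matrix ι κ ℝ) (b : ι → ℝ) (v : κ → ℝ) :
    |b ⬝ᵥ (A *ᵥ v)| ≤ ‖toLp 2 b‖ * (‖A‖ * ‖toLp 2 v‖) := by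
  calc |b ⬝ᵥ (A *ᵥ v)| = |inner ℝ (toLp 2 b) (toLp 2 (A *ᵥ v))| := by
        rw [EuclideanSpace.inner_toLp_toLp, star_trivial, dotProduct_comm]
    _ ≤ ‖toLp 2 b‖ * ‖toLp 2 (A *ᵥ v)‖ := abs_real_inner_le_norm _ _
    _ ≤ ‖toLp 2 b‖ * (‖A‖ * ‖toLp 2 v‖) := by gcongr; exact l2_opNorm_mulVec A (toLp 2 v)

section QuadFormMatrix

variable {ι κ R : Type*} [Fintype κ] [CommSemiring R]

/-- The matrix `M(u)` of the values at `u` of the quadratic forms given by the `Lᵢⱼ`; the pencil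
norm is the maximum of its spectral norm over unit vectors `u`. -/
def quadFormMatrix (L : ι → ι → Matrix κ κ R) (u : κ → R) : Matrix ι ι R :=
  of fun i j ↦ u ⬝ᵥ (L i j *ᵥ u)

lemma continuous_quadFormMatrix [TopologicalSpace R] [IsTopologicalSemiring R]
    (L : ι → ι → Matrix κ κ R) : Continuous (quadFormMatrix L) :=
  continuous_matrix fun i j ↦ by
    simp only [quadFormMatrix, of_apply]
    fun_prop

lemma dotProduct_quadFormMatrix_mulVec [Fintype ι] (L : ι → ι → Matrix κ κ R) (b v : ι → R)
    (u : κ → R) :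
    b ⬝ᵥ (quadFormMatrix L u *ᵥ v) = u ⬝ᵥ ((∑ k, b k • ∑ i, v i • L k i) *ᵥ u) := by
  simp only [sum_mulVec, smul_mulVec, dotProduct_sum, dotProduct_smul, smul_eq_mul]
  simp only [quadFormMatrix, dotProduct, mulVec, of_apply, mul_comm (v _)]

end QuadFormMatrix

section UnitVec

/-- The unit vectors of `ℝᵏ` for the Euclidean norm, as a subtype of `EuclideanSpace` so that it
is a compact space; `u.1.ofLp` is the underlying `Fin k → ℝ`. -/
abbrev UnitVec (k : ℕ) : Type := sphere (0 : EuclideanSpace ℝ (Fin k)) 1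

variable {k : ℕ}

lemma vecNorm_eq_norm (u : Fin k → ℝ) : vecNorm u = ‖toLp 2 u‖ := by
  simp [vecNorm, EuclideanSpace.norm_eq]

lemma setOf_vecNorm_eq_one_eq_range (f : (Fin k → ℝ) → ℝ) :
    {r | ∃ u, vecNorm u = 1 ∧ r = f u} = range fun u : UnitVec k ↦ f u.1.ofLp := by
  ext r
  constructor
  · rintro ⟨u, hu, rfl⟩
    exact ⟨⟨toLp 2 u, by simpa [vecNorm_eq_norm] using hu⟩, rfl⟩
  · rintro ⟨u, rfl⟩
    exact ⟨u.1.ofLp, by simp [vecNorm_eq_norm], rfl⟩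

lemma nonempty_unitVec (hk : 0 < k) : Nonempty (UnitVec k) :=
  have : NeZero k := ⟨hk.ne'⟩
  (NormedSpace.sphere_nonempty.mpr zero_le_one).to_subtype

lemma lambdaMin_eq_iInf (A : Matrix (Fin k) (Fin k) ℝ) :
    lambdaMin A = ⨅ u : UnitVec k, u.1.ofLp ⬝ᵥ (A *ᵥ u.1.ofLp) :=
  congrArg sInf (setOf_vecNorm_eq_one_eq_range _)

lemma bddBelow_range_dotProduct_mulVec (A : Matrix (Fin k) (Fin k) ℝ) :
    BddBelow (range fun u : UnitVec k ↦ u.1.ofLp ⬝ᵥ (A *ᵥ u.1.ofLp)) :=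
  (isCompact_range (by fun_prop)).bddBelow

lemma specNorm_eq_l2_opNorm (A : Matrix (Fin k) (Fin k) ℝ) : specNorm A = ‖A‖ := by
  rw [specNorm, setOf_vecNorm_eq_one_eq_range, ← l2_opNorm_toEuclideanCLM,
    ← ContinuousLinearMap.sSup_sphere_eq_norm, image_eq_range]
  simp only [vecNorm_eq_norm]
  rfl

end UnitVec

section Pencil

variable {n m : ℕ} (K : Fin n → Matrix (Fin m) (Fin m) ℝ)
  (L : Fin n → Fin n → Matrix (Fin m) (Fin m) ℝ)

lemma pencilNorm_eq_iSup :
    pencilNorm L = ⨆ u : UnitVec m, ‖quadFormMatrix L u.1.ofLp‖ := by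
  simp only [pencilNorm, specNorm_eq_l2_opNorm]
  exact congrArg sSup (setOf_vecNorm_eq_one_eq_range fun u ↦ ‖quadFormMatrix L u‖)

lemma norm_quadFormMatrix_le_pencilNorm (u : UnitVec m) :
    ‖quadFormMatrix L u.1.ofLp‖ ≤ pencilNorm L := by
  have hcont : Continuous fun u : UnitVec m ↦ ‖quadFormMatrix L u.1.ofLp‖ :=
    ((continuous_quadFormMatrix L).comp (by fun_prop)).norm
  rw [pencilNorm_eq_iSup]
  exact le_ciSup (isCompact_range hcont).bddAbove u

/-- Minus the derivative at `x`, in the direction `b`, of `x ↦ p(x, xxᵀ)`, when `Lᵢⱼ = Lⱼᵢ`. The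
value `s(x)` is the maximum of its smallest eigenvalue over unit vectors `b`. -/
def negPencilDeriv (x b : Fin n → ℝ) : Matrix (Fin m) (Fin m) ℝ :=
  -(∑ k, b k • (K k + deltaMat L k x))

lemma sFun_eq_iSup_iInf (x : Fin n → ℝ) :
    sFun K L x =
      ⨆ b : UnitVec n, ⨅ u : UnitVec m,
        u.1.ofLp ⬝ᵥ (negPencilDeriv K L x b.1.ofLp *ᵥ u.1.ofLp) := by
  simp only [← lambdaMin_eq_iInf]
  exact congrArg sSup (setOf_vecNorm_eq_one_eq_range fun b ↦ lambdaMin (negPencilDeriv K L x b))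

lemma bddAbove_range_iInf_negPencilDeriv (hm : 0 < m) (x : Fin n → ℝ) :
    BddAbove (range fun b : UnitVec n ↦ ⨅ u : UnitVec m,
      u.1.ofLp ⬝ᵥ (negPencilDeriv K L x b.1.ofLp *ᵥ u.1.ofLp)) := by
  obtain ⟨u⟩ := nonempty_unitVec hm
  have hcont : Continuous fun b : UnitVec n ↦
      u.1.ofLp ⬝ᵥ (negPencilDeriv K L x b.1.ofLp *ᵥ u.1.ofLp) := by
    unfold negPencilDeriv
    fun_prop
  exact (isCompact_range hcont).bddAbove.range_mono _
    fun _ ↦ ciInf_le (bddBelow_range_dotProduct_mulVec _) u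

lemma negPencilDeriv_eq_sub (x y b : Fin n → ℝ) :
    negPencilDeriv K L x b =
      negPencilDeriv K L y b - (2 : ℝ) • ∑ k, b k • ∑ i, (x - y) i • L k i := by
  simp only [negPencilDeriv, deltaMat, smul_add, Finset.sum_add_distrib, Pi.sub_apply, sub_smul,
    Finset.sum_sub_distrib, smul_sub, smul_comm _ (2 : ℝ), ← Finset.smul_sum]
  abel

lemma dotProduct_negPencilDeriv_mulVec (x y b : Fin n → ℝ) (u : Fin m → ℝ) :
    u ⬝ᵥ (negPencilDeriv K L x b *ᵥ u) =
      u ⬝ᵥ (negPencilDeriv K L y b *ᵥ u) - 2 * (b ⬝ᵥ (quadFormMatrix L u *ᵥ (x - y))) := by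
  rw [negPencilDeriv_eq_sub K L x y, sub_mulVec, dotProduct_sub, smul_mulVec, dotProduct_smul,
    smul_eq_mul, dotProduct_quadFormMatrix_mulVec]

lemma dotProduct_negPencilDeriv_mulVec_le (x y : Fin n → ℝ) (b : UnitVec n)
    (u : UnitVec m) :
    u.1.ofLp ⬝ᵥ (negPencilDeriv K L x b.1.ofLp *ᵥ u.1.ofLp) ≤
      u.1.ofLp ⬝ᵥ (negPencilDeriv K L y b.1.ofLp *ᵥ u.1.ofLp)
        + 2 * pencilNorm L * vecNorm (x - y) := by
  have hM : |b.1.ofLp ⬝ᵥ (quadFormMatrix L u.1.ofLp *ᵥ (x - y))| ≤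
      pencilNorm L * vecNorm (x - y) := by
    calc _ ≤ ‖b.1‖ * (‖quadFormMatrix L u.1.ofLp‖ * ‖toLp 2 (x - y)‖) :=
          abs_dotProduct_mulVec_le _ _ _
      _ = ‖quadFormMatrix L u.1.ofLp‖ * vecNorm (x - y) := by
          rw [norm_eq_of_mem_sphere, one_mul, vecNorm_eq_norm]
      _ ≤ pencilNorm L * vecNorm (x - y) := by
          gcongr
          · exact Real.sqrt_nonneg _
          · exact norm_quadFormMatrix_le_pencilNorm L u
  rw [dotProduct_negPencilDeriv_mulVec K L x y]
  linarith [neg_le_of_abs_le hM]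

end Pencil

theorem bmi_s_lipschitz_general {n m : ℕ} (hn : 0 < n) (hm : 0 < m)
    (K : Fin n → Matrix (Fin m) (Fin m) ℝ)
    (L : Fin n → Fin n → Matrix (Fin m) (Fin m) ℝ) (x y : Fin n → ℝ) :
    sFun K L x - sFun K L y ≤ 2 * pencilNorm L * vecNorm (x - y) := by
  have := nonempty_unitVec hn
  have := nonempty_unitVec hm
  rw [sub_le_iff_le_add', sFun_eq_iSup_iInf, sFun_eq_iSup_iInf]
  exact ciSup_ciInf_le_ciSup_ciInf_add (fun _ ↦ bddBelow_range_dotProduct_mulVec _)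
    (bddAbove_range_iInf_negPencilDeriv K L hm y) (dotProduct_negPencilDeriv_mulVec_le K L x y)

theorem bmi_s_lipschitz {n m : ℕ} (hn : 0 < n) (hm : 0 < m)
    (K : Fin n → Matrix (Fin m) (Fin m) ℝ)
    (L : Fin n → Fin n → Matrix (Fin m) (Fin m) ℝ)
    (hK : ∀ k, (K k).IsSymm)
    (hL : ∀ i j, (L i j).IsSymm) (hLsy : ∀ i j, L i j = L j i) :
    ∀ x y : Fin n → ℝ,
      sFun K L x - sFun K L y ≤ 2 * pencilNorm L * vecNorm (x - y) :=
  bmi_s_lipschitz_general hn hm K L
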